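/- Let T be a contraction on a complex separable Hilbert space H, and let U on K₁ ⊇ H and V on K₂ ⊇ H be two unitary dilations of T. Then for every f ∈ C(𝕋): (i) ‖P_H^{K₁} f(U)|_H‖ ≤ sup_{z∈𝕋} |f(z)| (the von Neumann inequality), and (ii) P_H^{K₁} f(U)|_H = P_H^{K₂} f(V)|_H, i.e., the operator f(T) := P_H f(U)|_H is independent of the choice of unitary dilation. -/

import Mathlib

/-!
Since `U` is unitary, its spectrum lies in the unit circle, so `f ↦ f(U)` extends to a continuous
⋆-homomorphism on `C(𝕋)`. The von Neumann inequality holds because this homomorphism and the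
compression to `H` are both contractive.

For the independence, `f ↦ P_H f(U)|_H` and `f ↦ P_H f(V)|_H` are continuous linear maps on `C(𝕋)`.
The dilation property makes them agree on the monomials `z ^ a * conj z ^ b`, because on the circle
each of these is a power of `z` or of `conj z` and so is sent to a power of `T` or of `T*`
(`IsUnitaryDilation.compress_pow_mul_star_pow`). Those monomials span a dense subspace by the
Stone–Weierstrass theorem (`circle_monomials_dense`).
-/

/- Formalization of a statement from "Lipschitz Estimates and an application to trace formulae"
   (Bhattacharyya, Chattopadhyay, Giri, Pradhan). -/

noncomputable section

open scoped ENNReal NNReal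
open ContinuousLinearMap MeasureTheory Filter Topology

variable {H : Type} [NormedAddCommGroup H] [InnerProductSpace ℂ H] [CompleteSpace H]

/-- `U` (a unitary on `K`) is a unitary power dilation of `T` with respect to the isometric
embedding `e : H → K`:  `T^n = P_H U^n |_H` and `(T^*)^n = P_H (U^*)^n |_H` for all `n ≥ 0`. -/
def IsUnitaryDilation {K : Type} [NormedAddCommGroup K] [InnerProductSpace ℂ K]
    [CompleteSpace K] (T : H →L[ℂ] H) (e : H →ₗᵢ[ℂ] K) (U : K →L[ℂ] K) : Prop :=
  U ∈ unitary (K →L[ℂ] K) ∧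
    (∀ n : ℕ, T ^ n =
      ContinuousLinearMap.adjoint e.toContinuousLinearMap ∘L
        ((U ^ n) ∘L e.toContinuousLinearMap)) ∧
    (∀ n : ℕ, (ContinuousLinearMap.adjoint T) ^ n =
      ContinuousLinearMap.adjoint e.toContinuousLinearMap ∘L
        (((ContinuousLinearMap.adjoint U) ^ n) ∘L e.toContinuousLinearMap))

/-- The compression `f(T) := P_H f(U)|_H`, where `U` is a unitary dilation of `T` via the
embedding `e` and `f(U)` is given by the continuous functional calculus. -/
def dilCalc {K : Type} [NormedAddCommGroup K] [InnerProductSpace ℂ K] [CompleteSpace K]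
    (f : ℂ → ℂ) (e : H →ₗᵢ[ℂ] K) (U : K →L[ℂ] K) : H →L[ℂ] H :=
  ContinuousLinearMap.adjoint e.toContinuousLinearMap ∘L
    ((cfc f U) ∘L e.toContinuousLinearMap)

/-- The compression `A ↦ P_H A|_H` as a continuous linear map on operators. -/
def compressL {K : Type} [NormedAddCommGroup K] [InnerProductSpace ℂ K] [CompleteSpace K]
    (e : H →ₗᵢ[ℂ] K) : (K →L[ℂ] K) →L[ℂ] (H →L[ℂ] H) :=
  (ContinuousLinearMap.compL ℂ H K H (ContinuousLinearMap.adjoint e.toContinuousLinearMap)) ∘L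
    ((ContinuousLinearMap.compL ℂ H K K).flip e.toContinuousLinearMap)

lemma compressL_apply {K : Type} [NormedAddCommGroup K] [InnerProductSpace ℂ K] [CompleteSpace K]
    (e : H →ₗᵢ[ℂ] K) (A : K →L[ℂ] K) :
    compressL e A = ContinuousLinearMap.adjoint e.toContinuousLinearMap ∘L
      (A ∘L e.toContinuousLinearMap) := rfl

lemma norm_compressL_apply_le {K : Type} [NormedAddCommGroup K] [InnerProductSpace ℂ K]
    [CompleteSpace K] (e : H →ₗᵢ[ℂ] K) (A : K →L[ℂ] K) : ‖compressL e A‖ ≤ ‖A‖ := by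
  have he : ‖e.toContinuousLinearMap‖ ≤ 1 := e.norm_toContinuousLinearMap_le
  have he' : ‖ContinuousLinearMap.adjoint e.toContinuousLinearMap‖ ≤ 1 := by
    rwa [LinearIsometryEquiv.norm_map]
  calc ‖compressL e A‖
      ≤ ‖ContinuousLinearMap.adjoint e.toContinuousLinearMap‖ *
        (‖A‖ * ‖e.toContinuousLinearMap‖) :=
        (opNorm_comp_le _ _).trans (by gcongr; exact opNorm_comp_le _ _)
    _ ≤ 1 * (‖A‖ * 1) := by gcongr
    _ = ‖A‖ := by ring

lemma pow_mul_pow_of_mul_eq_one {M : Type*} [Monoid M] {u v : M} (h : u * v = 1) (a b : ℕ) :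
    u ^ a * v ^ b = u ^ (a - b) * v ^ (b - a) := by
  have key : ∀ n : ℕ, u ^ n * v ^ n = 1 := by
    intro n
    induction n with
    | zero => simp
    | succ n ih => rw [pow_succ, pow_succ', mul_assoc, ← mul_assoc u v, h, one_mul, ih]
  rcases le_total a b with hab | hab
  · obtain ⟨c, rfl⟩ := Nat.exists_eq_add_of_le hab
    rw [pow_add, ← mul_assoc, key]
    simp
  · obtain ⟨c, rfl⟩ := Nat.exists_eq_add_of_le hab
    rw [add_comm, pow_add, mul_assoc, key]
    simp

/-- The truncated subtractions single out the net exponent: at least one of the two factors on the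
right is `1`. -/
lemma IsUnitaryDilation.compress_pow_mul_star_pow {K : Type} [NormedAddCommGroup K]
    [InnerProductSpace ℂ K] [CompleteSpace K] {T : H →L[ℂ] H} {e : H →ₗᵢ[ℂ] K}
    {U : K →L[ℂ] K} (h : IsUnitaryDilation T e U) (a b : ℕ) :
    compressL e (U ^ a * star U ^ b) =
      T ^ (a - b) * (ContinuousLinearMap.adjoint T) ^ (b - a) := by
  obtain ⟨hU, h1, h2⟩ := h
  rw [pow_mul_pow_of_mul_eq_one (Unitary.mul_star_self_of_mem hU)]
  rcases le_total a b with hab | hab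
  · rw [Nat.sub_eq_zero_of_le hab, pow_zero, pow_zero, one_mul, one_mul, h2]
    rfl
  · rw [Nat.sub_eq_zero_of_le hab, pow_zero, pow_zero, mul_one, mul_one, h1]
    rfl

/-- The coordinate function `z` on the unit circle. -/
def circleCoord : C(Metric.sphere (0 : ℂ) 1, ℂ) :=
  ContinuousMap.restrict (Metric.sphere (0 : ℂ) 1) (.id ℂ)

lemma circle_monomials_dense :
    Dense (Submodule.span ℂ (Set.range fun p : ℕ × ℕ =>
      circleCoord ^ p.1 * star circleCoord ^ p.2) : Set C(Metric.sphere (0 : ℂ) 1, ℂ)) := by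
  have htop := ContinuousMap.elemental_id_eq_top (𝕜 := ℂ) (Metric.sphere (0 : ℂ) 1)
  have hdense : Dense (StarAlgebra.adjoin ℂ {circleCoord} :
      Set C(Metric.sphere (0 : ℂ) 1, ℂ)) := by
    intro g
    have hg : g ∈ StarAlgebra.elemental ℂ circleCoord := by
      rw [circleCoord, htop]
      trivial
    exact hg
  refine hdense.mono ?_
  intro g hg
  have hg' : g ∈ Subalgebra.toSubmodule (StarAlgebra.adjoin ℂ {circleCoord}).toSubalgebra := hg
  rw [StarAlgebra.adjoin_eq_span] at hg'
  refine Submodule.span_mono ?_ hg'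
  intro m hm
  induction hm using Submonoid.closure_induction with
  | mem x hx =>
    rcases hx with hx | hx
    · exact ⟨(1, 0), by simp_all⟩
    · refine ⟨(0, 1), ?_⟩
      have : star x = circleCoord := hx
      simp [← this]
  | one => exact ⟨(0, 0), by simp⟩
  | mul x y _ _ hx hy =>
    obtain ⟨p, rfl⟩ := hx
    obtain ⟨q, rfl⟩ := hy
    refine ⟨(p.1 + q.1, p.2 + q.2), ?_⟩
    simp only [pow_add]
    ring

lemma dilCalc_eq_compressL_cfcHomSuperset {K : Type} [NormedAddCommGroup K]
    [InnerProductSpace ℂ K] [CompleteSpace K] (e : H →ₗᵢ[ℂ] K) {U : K →L[ℂ] K}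
    (hn : IsStarNormal U) (hs : spectrum ℂ U ⊆ Metric.sphere (0 : ℂ) 1)
    {f : ℂ → ℂ} (hf : ContinuousOn f (Metric.sphere (0 : ℂ) 1)) :
    dilCalc f e U = compressL e (cfcHomSuperset hn hs ⟨_, hf.domRestrict⟩) := by
  rw [dilCalc, compressL_apply, cfc_apply f U hn (hf.mono hs), cfcHomSuperset_apply]
  rfl

lemma isStarNormal_of_mem_unitary_clm {K : Type} [NormedAddCommGroup K]
    [InnerProductSpace ℂ K] [CompleteSpace K] {U : K →L[ℂ] K}
    (hU : U ∈ unitary (K →L[ℂ] K)) : IsStarNormal U :=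
  ⟨by rw [commute_iff_eq, Unitary.star_mul_self_of_mem hU, Unitary.mul_star_self_of_mem hU]⟩

variable [TopologicalSpace.SeparableSpace H]

/-- Let `T` be a contraction and let `U` on `K₁` and `V` on `K₂` be two
unitary dilations of `T`.  Then, for every `f ∈ C(𝕋)`: (i) the von Neumann inequality
`‖P_H f(U)|_H‖ ≤ sup_{z ∈ 𝕋} |f(z)|` holds, and (ii) `P_H f(U)|_H = P_H f(V)|_H`, i.e. the
operator `f(T) := P_H f(U)|_H` does not depend on the choice of unitary dilation. -/
theorem von_neumann_and_dilation_independence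
    {K₁ K₂ : Type}
    [NormedAddCommGroup K₁] [InnerProductSpace ℂ K₁] [CompleteSpace K₁]
    [NormedAddCommGroup K₂] [InnerProductSpace ℂ K₂] [CompleteSpace K₂]
    (T : H →L[ℂ] H) (hT : ‖T‖ ≤ 1)
    (e₁ : H →ₗᵢ[ℂ] K₁) (U : K₁ →L[ℂ] K₁) (hU : IsUnitaryDilation T e₁ U)
    (e₂ : H →ₗᵢ[ℂ] K₂) (V : K₂ →L[ℂ] K₂) (hV : IsUnitaryDilation T e₂ V)
    (f : ℂ → ℂ) (hf : ContinuousOn f (Metric.sphere (0:ℂ) 1)) :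
    ‖dilCalc f e₁ U‖ ≤ (⨆ z : Metric.sphere (0:ℂ) 1, ‖f (z : ℂ)‖) ∧
      dilCalc f e₁ U = dilCalc f e₂ V := by
  have hU₁ := hU.1
  have hV₁ := hV.1
  have hsU := spectrum.subset_circle_of_unitary (𝕜 := ℂ) hU₁
  have hsV := spectrum.subset_circle_of_unitary (𝕜 := ℂ) hV₁
  have hnU := isStarNormal_of_mem_unitary_clm hU₁
  have hnV := isStarNormal_of_mem_unitary_clm hV₁
  constructor
  -- compactness of the circle bounds `‖f‖`, so that the supremum is a genuine one
  · have hbdd : BddAbove (Set.range fun z : Metric.sphere (0:ℂ) 1 => ‖f (z : ℂ)‖) :=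
      (isCompact_range (hf.domRestrict.norm)).bddAbove
    refine (norm_compressL_apply_le e₁ (cfc f U)).trans (norm_cfc_le ?_ ?_)
    · exact Real.iSup_nonneg fun z => norm_nonneg _
    · intro z hz
      exact le_ciSup hbdd ⟨z, hsU hz⟩
  · rw [dilCalc_eq_compressL_cfcHomSuperset e₁ hnU hsU hf,
      dilCalc_eq_compressL_cfcHomSuperset e₂ hnV hsV hf]
    let L₁ : C(Metric.sphere (0:ℂ) 1, ℂ) →L[ℂ] (H →L[ℂ] H) :=
      compressL e₁ ∘L ⟨(cfcHomSuperset hnU hsU).toAlgHom.toLinearMap,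
        cfcHomSuperset_continuous hnU hsU⟩
    let L₂ : C(Metric.sphere (0:ℂ) 1, ℂ) →L[ℂ] (H →L[ℂ] H) :=
      compressL e₂ ∘L ⟨(cfcHomSuperset hnV hsV).toAlgHom.toLinearMap,
        cfcHomSuperset_continuous hnV hsV⟩
    have hL : L₁ = L₂ := by
      refine ContinuousLinearMap.ext_on circle_monomials_dense ?_
      rintro _ ⟨⟨a, b⟩, rfl⟩
      change compressL e₁ (cfcHomSuperset hnU hsU (circleCoord ^ a * star circleCoord ^ b)) =
        compressL e₂ (cfcHomSuperset hnV hsV (circleCoord ^ a * star circleCoord ^ b))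
      simp only [map_mul, map_pow, map_star, circleCoord, cfcHomSuperset_id]
      rw [hU.compress_pow_mul_star_pow, hV.compress_pow_mul_star_pow]
    exact congrArg (fun L => L ⟨_, hf.domRestrict⟩) hL
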